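/- arXiv:math/0602143 — 2 statements merged into one kernel-verified Lean document; each statement's English description precedes it below -/
import Mathlib

section
/- If a permutation class C is contained in Grid(M) for some matrix M with entries in {0, 1, −1} whose bipartite graph G(M) is a matching (every vertex has degree at most 1), then there is a polynomial p and an integer N such that the number of permutations of length n in C equals p(n) for all n ≥ N. -/
/-- `σ ≤ π`: the permutation `π` contains the pattern `σ`, i.e. `π` has a subsequence
in the same relative order as `σ`. -/
def PermContains {k n : ℕ} (σ : Equiv.Perm (Fin k)) (π : Equiv.Perm (Fin n)) : Prop :=
  ∃ f : Fin k → Fin n, StrictMono f ∧ ∀ i j : Fin k, σ i < σ j ↔ π (f i) < π (f j)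

/-- A permutation class: a set of permutations (of each length) closed downward
under the containment order. -/
def IsPermClass (C : ∀ n : ℕ, Set (Equiv.Perm (Fin n))) : Prop :=
  ∀ (k n : ℕ) (σ : Equiv.Perm (Fin k)) (π : Equiv.Perm (Fin n)),
    π ∈ C n → PermContains σ π → σ ∈ C k
/-- The point `i` (with value `π i`) lies in the block of the gridding `(c, r)`
indexed by column `k` and row `l`. -/
def InBlock {n t u : ℕ} (π : Equiv.Perm (Fin n)) (c : Fin (t + 1) → ℕ) (r : Fin (u + 1) → ℕ)
    (k : Fin t) (l : Fin u) (i : Fin n) : Prop :=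
  c k.castSucc ≤ (i : ℕ) ∧ (i : ℕ) < c k.succ ∧
    r l.castSucc ≤ (π i : ℕ) ∧ (π i : ℕ) < r l.succ

/-- `(c, r)` is an `M`-gridding of `π`: each block is increasing, decreasing or empty
according to the corresponding entry of the `t × u` matrix `M` (entries in {0, 1, -1},
columns indexed by `Fin t`, rows by `Fin u`). -/
def IsGridding {n t u : ℕ} (M : Fin t → Fin u → SignType) (π : Equiv.Perm (Fin n))
    (c : Fin (t + 1) → ℕ) (r : Fin (u + 1) → ℕ) : Prop :=
  Monotone c ∧ Monotone r ∧ c 0 = 0 ∧ c (Fin.last t) = n ∧ r 0 = 0 ∧ r (Fin.last u) = n ∧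
    ∀ (k : Fin t) (l : Fin u),
      (M k l = 1 → ∀ i j : Fin n,
        InBlock π c r k l i → InBlock π c r k l j → i < j → π i < π j) ∧
      (M k l = -1 → ∀ i j : Fin n,
        InBlock π c r k l i → InBlock π c r k l j → i < j → π j < π i) ∧
      (M k l = 0 → ∀ i : Fin n, ¬ InBlock π c r k l i)

/-- `π ∈ Grid(M)`: the permutation `π` possesses an `M`-gridding. -/
def InGrid {n t u : ℕ} (M : Fin t → Fin u → SignType) (π : Equiv.Perm (Fin n)) : Prop :=
  ∃ c r, IsGridding M π c r
/-- The bipartite graph `G(M)` is a matching: every vertex (column or row) is incident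
to at most one edge, i.e. every column and every row of `M` has at most one nonzero entry. -/
def IsMatchingMat {t u : ℕ} (M : Fin t → Fin u → SignType) : Prop :=
  (∀ (k : Fin t) (l l' : Fin u), M k l ≠ 0 → M k l' ≠ 0 → l = l') ∧
  (∀ (k k' : Fin t) (l : Fin u), M k l ≠ 0 → M k' l ≠ 0 → k = k')

def EvPoly (f : ℕ → ℕ) : Prop :=
  ∃ (p : Polynomial ℚ) (N : ℕ), ∀ n : ℕ, N ≤ n → (f n : ℚ) = p.eval (n : ℚ)

theorem EvPoly.sum {ι : Type*} (s : Finset ι) (f : ι → ℕ → ℕ) (h : ∀ i ∈ s, EvPoly (f i)) :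
    EvPoly (fun n => ∑ i ∈ s, f i n) := by
  classical
  induction s using Finset.induction_on with
  | empty => exact ⟨0, 0, by simp⟩
  | insert i s his ih =>
    obtain ⟨p, N, hp⟩ := h i (by simp)
    obtain ⟨q, N', hq⟩ := ih (fun j hj => h j (by simp [hj]))
    refine ⟨p + q, max N N', fun n hn => ?_⟩
    beta_reduce
    rw [Finset.sum_insert his]
    push_cast
    have h2 := hq n (le_trans (le_max_right _ _) hn)
    push_cast at h2
    rw [hp n (le_trans (le_max_left _ _) hn), h2, Polynomial.eval_add]

/-- membership depends only on a truncation, for all large truncations -/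
def EvConst {m : ℕ} (S : Set (Fin m → ℕ)) : Prop :=
  ∃ K, ∀ K', K ≤ K' → ∀ a : Fin m → ℕ, a ∈ S ↔ (fun j => min (a j) K') ∈ S

theorem EvConst.inter {m : ℕ} {S T : Set (Fin m → ℕ)} (hS : EvConst S) (hT : EvConst T) :
    EvConst (S ∩ T) := by
  obtain ⟨K, hK⟩ := hS
  obtain ⟨L, hL⟩ := hT
  refine ⟨max K L, fun K' h a => ?_⟩
  exact and_congr (hK K' (le_trans (le_max_left _ _) h) a) (hL K' (le_trans (le_max_right _ _) h) a)

theorem EvConst.compl {m : ℕ} {S : Set (Fin m → ℕ)} (hS : EvConst S) : EvConst Sᶜ := by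
  obtain ⟨K, hK⟩ := hS
  exact ⟨K, fun K' h a => not_congr (hK K' h a)⟩

theorem EvConst.of_isLowerSet {m : ℕ} {S : Set (Fin m → ℕ)} (hS : IsLowerSet S) : EvConst S := by
  have hfin : {a | Minimal (· ∈ Sᶜ) a}.Finite :=
    WellQuasiOrderedLE.finite_of_isAntichain (setOfPred_minimal_antichain _)
  obtain ⟨B, hB⟩ := hfin.bddAbove
  refine ⟨∑ j, B j, fun K' hK a => ⟨fun h => hS (fun j => min_le_left _ _) h, fun h => ?_⟩⟩
  by_contra hc
  obtain ⟨b, hba, hb⟩ := exists_minimal_le_of_wellFoundedLT (· ∈ Sᶜ) a hc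
  refine hb.prop (hS (fun j => le_min (hba j) ?_) h)
  exact (hB hb j).trans ((Finset.single_le_sum (fun _ _ => Nat.zero_le _) (Finset.mem_univ j)).trans hK)

open PowerSeries in
theorem coeff_factor (K b x : ℕ) (hb : b ≤ K) :
    coeff x ((X : ℚ⟦X⟧) ^ b * (if b = K then (invOneSubPow ℚ 1).val else 1)) =
      if min x K = b then 1 else 0 := by
  rw [coeff_X_pow_mul']
  split_ifs with h1 h2 h3 h3 h2
  · rw [invOneSubPow_val_succ_eq_mk_add_choose]; simp
  · omega
  · rw [show x - b = 0 by omega]; simp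
  · rw [coeff_one, if_neg]; omega
  · omega
  · rfl

open PowerSeries in
theorem count_trunc {m : ℕ} (K : ℕ) (b : Fin m → ℕ) (hb : ∀ j, b j ≤ K) :
    EvPoly (fun n => ((Finset.piAntidiag Finset.univ n).filter
      (fun a : Fin m → ℕ => (fun j => min (a j) K) = b)).card) := by
  classical
  set d := (Finset.univ.filter (fun j => b j = K)).card
  set P : Polynomial ℚ := Polynomial.X ^ (∑ j, b j) with hP
  have key : (P * (invOneSubPow ℚ d).val : ℚ⟦X⟧) =
      ∏ j, ((X : ℚ⟦X⟧) ^ b j * (if b j = K then (invOneSubPow ℚ 1).val else 1)) := by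
    rw [Finset.prod_mul_distrib, Finset.prod_pow_eq_pow_sum, hP, Finset.prod_ite]
    simp only [Finset.prod_const, one_pow, mul_one]
    push_cast
    congr 1
    rw [← Units.val_pow_eq_pow_val]
    congr 1
    rw [invOneSubPow_eq_inv_one_sub_pow, invOneSubPow_eq_inv_one_sub_pow, pow_one]
  refine ⟨P.hilbertPoly d, P.natDegree + 1, fun n hn => ?_⟩
  rw [← Polynomial.coeff_mul_invOneSubPow_eq_hilbertPoly_eval d (by omega), key, coeff_prod]
  beta_reduce
  rw [Finset.card_filter]
  push_cast
  symm
  refine Finset.sum_bij' (fun l _ => (l : Fin m → ℕ))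
    (fun a _ => Finsupp.equivFunOnFinite.symm a) ?_ ?_ ?_ ?_ ?_
  · intro l hl
    simp at hl ⊢
    exact hl
  · intro a ha
    simp at ha ⊢
    exact ha
  · intro l hl; ext; simp
  · intro a ha; ext; simp
  · intro l hl
    simp only [coeff_factor K _ _ (hb _)]
    rw [Finset.prod_ite_zero]
    simp [funext_iff]

theorem EvConst.evPoly {m : ℕ} {S : Set (Fin m → ℕ)} (hS : EvConst S) :
    EvPoly (fun n => Nat.card {a : Fin m → ℕ // a ∈ S ∧ ∑ j, a j = n}) := by
  classical
  obtain ⟨K, hK⟩ := hS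
  have h := EvPoly.sum ((Fintype.piFinset (fun _ : Fin m => Finset.range (K + 1))).filter (· ∈ S))
    (fun b n => ((Finset.piAntidiag Finset.univ n).filter
      (fun a : Fin m → ℕ => (fun j => min (a j) K) = b)).card) (by
      intro b hb
      apply count_trunc
      intro j
      simp at hb
      have := hb.1 j
      omega)
  convert h using 2 with n
  have : Nat.card {a : Fin m → ℕ // a ∈ S ∧ ∑ j, a j = n} =
      ((Finset.piAntidiag Finset.univ n).filter (· ∈ S)).card := by
    apply Nat.subtype_card
    intro a
    simp [and_comm]
  rw [this]
  rw [Finset.card_eq_sum_card_fiberwise (f := fun a j => min (a j) K)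
    (t := ((Fintype.piFinset (fun _ : Fin m => Finset.range (K + 1))).filter (· ∈ S)))]
  · refine Finset.sum_congr rfl fun b hb => ?_
    rw [Finset.filter_filter]
    congr 1
    refine Finset.filter_congr fun a _ => ⟨fun h => h.2, fun h => ⟨?_, h⟩⟩
    rw [hK K le_rfl, h]
    exact (Finset.mem_filter.1 hb).2
  · intro a ha
    simp at ha ⊢
    exact (hK K le_rfl a).1 ha.2

theorem perm_ext_of_lt {n : ℕ} (σ τ : Equiv.Perm (Fin n))
    (h : ∀ i j, σ i < σ j ↔ τ i < τ j) : σ = τ := by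
  have h1 : StrictMono (fun i => τ (σ.symm i)) := by
    intro i j hij
    exact (h _ _).1 (by simpa using hij)
  have h2 : StrictMono (fun i => σ (τ.symm i)) := by
    intro i j hij
    exact (h _ _).2 (by simpa using hij)
  ext i
  have a1 := h1.id_le (σ i)
  have a2 := h2.id_le (τ i)
  simp at a1 a2
  exact congrArg _ (le_antisymm a1 a2)

theorem exists_std {n : ℕ} {α : Type*} [LinearOrder α] (w : Fin n → α)
    (hw : Function.Injective w) : ∃ π : Equiv.Perm (Fin n), ∀ i j, π i < π j ↔ w i < w j := by
  refine ⟨(Tuple.sort w)⁻¹, fun i j => ?_⟩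
  have hm : StrictMono (w ∘ Tuple.sort w) :=
    (Tuple.monotone_sort w).strictMono_of_injective (hw.comp (Tuple.sort w).injective)
  rw [← hm.lt_iff_lt]
  simp

/-- no value strictly between those at `p` and `q` -/
def IsBond {n : ℕ} (π : Equiv.Perm (Fin n)) (p q : Fin n) : Prop :=
  ∀ x, x ≠ p → x ≠ q → (π p < π x ↔ π q < π x)

open Classical in
/-- positions of non-bonds -/
noncomputable def NB {n : ℕ} (π : Equiv.Perm (Fin n)) : Finset (Fin n) :=
  Finset.univ.filter (fun p => ∃ q : Fin n, q.val = p.val + 1 ∧ ¬ IsBond π p q)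

theorem mem_NB {n : ℕ} (π : Equiv.Perm (Fin n)) (p : Fin n) :
    p ∈ NB π ↔ ∃ q : Fin n, q.val = p.val + 1 ∧ ¬ IsBond π p q := by
  classical
  simp [NB]

theorem bond_chain {n : ℕ} (π : Equiv.Perm (Fin n)) (p q : Fin n) (hpq : p ≤ q)
    (h : ∀ j, p ≤ j → j < q → j ∉ NB π) (x : Fin n) (hx : x < p ∨ q < x) :
    π p < π x ↔ π q < π x := by
  obtain ⟨k, hk⟩ := Nat.exists_eq_add_of_le (Fin.le_def.1 hpq)
  induction k generalizing q with
  | zero =>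
    have : q = p := Fin.ext (by simpa using hk)
    rw [this]
  | succ k ih =>
    have hlt : p.val + k < n := by omega
    set y : Fin n := ⟨p.val + k, hlt⟩ with hy
    have hyv : y.val = p.val + k := rfl
    have h1 := ih y (by rw [Fin.le_def]; omega) (fun j h1 h2 => h j h1 (by rw [Fin.lt_def] at *; omega))
      (by rw [Fin.lt_def, Fin.lt_def] at *; omega) hyv
    have h2 := h y (by rw [Fin.le_def]; omega) (by rw [Fin.lt_def]; omega)
    rw [mem_NB] at h2
    push Not at h2
    have h3 := h2 q (by omega) x (by rintro rfl; rw [Fin.lt_def, Fin.lt_def] at *; omega)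
      (by rintro rfl; rw [Fin.lt_def, Fin.lt_def] at *; omega)
    rw [h1, h3]

theorem perm_not_lt {n : ℕ} (π : Equiv.Perm (Fin n)) {x y : Fin n} (h : x ≠ y) :
    ¬ π x < π y ↔ π y < π x := by
  have := π.injective.ne h
  rw [not_lt]
  exact ⟨fun h => lt_of_le_of_ne h this.symm, le_of_lt⟩

theorem bond_sign {n : ℕ} (π : Equiv.Perm (Fin n)) (p q i i' : Fin n)
    (h : ∀ j, p ≤ j → j < q → j ∉ NB π) (h1 : p ≤ i) (h2 : i < i') (h3 : i' ≤ q) :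
    π i < π i' ↔ π p < π q := by
  have a1 := bond_chain π p i h1 (fun j u v => h j u (by order)) i' (Or.inr h2)
  have a2 := bond_chain π i' q h3 (fun j u v => h j (by order) v) p (Or.inl (by order))
  rw [← a1, ← perm_not_lt π (by order : i' ≠ p), ← perm_not_lt π (by order : q ≠ p), a2]

theorem NB_mono {k n : ℕ} (σ : Equiv.Perm (Fin k)) (π : Equiv.Perm (Fin n))
    (h : PermContains σ π) : (NB σ).card ≤ (NB π).card := by
  obtain ⟨f, hf, hσ⟩ := h
  have key : ∀ i ∈ NB σ, ∃ j ∈ NB π, f i ≤ j ∧ ∀ i', i < i' → j < f i' := by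
    intro i hi
    rw [mem_NB] at hi
    obtain ⟨q, hq, hb⟩ := hi
    have hiq : i < q := by rw [Fin.lt_def]; omega
    by_contra hc
    push Not at hc
    apply hb
    intro x hx1 hx2
    rw [hσ, hσ]
    apply bond_chain π (f i) (f q) (hf hiq).le
    · intro j h1 h2 h3
      obtain ⟨i', h4, h5⟩ := hc j h3 h1
      have : q ≤ i' := by rw [Fin.le_def]; rw [Fin.lt_def] at h4; omega
      have := hf.monotone this
      order
    · rcases lt_trichotomy x i with h | h | h
      · exact Or.inl (hf h)
      · exact absurd h hx1
      · right
        apply hf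
        rw [Fin.lt_def] at *
        have : x.val ≠ q.val := fun h => hx2 (Fin.ext h)
        omega
  have key' : ∀ i, ∃ j, i ∈ NB σ → j ∈ NB π ∧ f i ≤ j ∧ ∀ i', i < i' → j < f i' := by
    intro i
    by_cases hi : i ∈ NB σ
    · obtain ⟨j, h1, h2⟩ := key i hi
      exact ⟨j, fun _ => ⟨h1, h2⟩⟩
    · exact ⟨f i, fun h => absurd h hi⟩
  choose F hF using key'
  refine Finset.card_le_card_of_injOn F (fun i hi => (hF i hi).1) ?_
  intro i hi i' hi' he
  rcases lt_trichotomy i i' with h | h | h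
  · have := (hF i hi).2.2 i' h
    have := (hF i' hi').2.1
    order
  · exact h
  · have := (hF i' hi').2.2 i h
    have := (hF i hi).2.1
    order

theorem exists_interval {t n : ℕ} (c : Fin (t + 1) → ℕ) (h0 : c 0 = 0)
    (hl : c (Fin.last t) = n) (i : ℕ) (hi : i < n) :
    ∃ k : Fin t, c k.castSucc ≤ i ∧ i < c k.succ := by
  by_contra hc
  push Not at hc
  have : ∀ k : Fin (t + 1), c k ≤ i := by
    intro k
    induction k using Fin.induction with
    | zero => omega
    | succ k ih => exact hc k ih
  have := this (Fin.last t)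
  omega

theorem NB_grid {n t u : ℕ} (M : Fin t → Fin u → SignType) (hM : IsMatchingMat M)
    (π : Equiv.Perm (Fin n)) (h : InGrid M π) : (NB π).card ≤ t := by
  obtain ⟨c, r, hc, hr, c0, cl, r0, rl, hg⟩ := h
  choose col hcol using fun i : Fin n => exists_interval c c0 cl i i.2
  choose row hrow using fun i : Fin n => exists_interval r r0 rl (π i) (π i).2
  have hne : ∀ i, M (col i) (row i) ≠ 0 := fun i h0 =>
    (hg (col i) (row i)).2.2 h0 i ⟨(hcol i).1, (hcol i).2, (hrow i).1, (hrow i).2⟩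
  have hrl : ∀ (i : Fin n) (l : Fin u), r l.castSucc ≤ π i → (π i : ℕ) < r l.succ → l = row i := by
    intro i l h1 h2
    by_contra hne'
    rcases lt_or_gt_of_ne hne' with h | h
    · have : r l.succ ≤ r (row i).castSucc := hr (by rw [Fin.le_def, Fin.lt_def] at *; simp; omega)
      have := (hrow i).1
      omega
    · have : r (row i).succ ≤ r l.castSucc := hr (by rw [Fin.le_def, Fin.lt_def] at *; simp; omega)
      have := (hrow i).2
      omega
  have hrc : ∀ i i', row i = row i' ↔ col i = col i' := by
    intro i i'
    constructor
    · intro h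
      have h1 := hne i
      rw [h] at h1
      exact hM.2 _ _ _ h1 (hne i')
    · intro h
      have h1 := hne i
      rw [h] at h1
      exact hM.1 _ _ _ h1 (hne i')
  have hbond : ∀ p q : Fin n, q.val = p.val + 1 → col p = col q → IsBond π p q := by
    intro p q hpq hcpq x hxp hxq
    have hrpq := (hrc p q).2 hcpq
    have hlt : p < q := by rw [Fin.lt_def]; omega
    by_cases hx : col x = col p
    · have hxr := (hrc x p).2 hx
      have bp : InBlock π c r (col p) (row p) p := ⟨(hcol p).1, (hcol p).2, (hrow p).1, (hrow p).2⟩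
      have bq : InBlock π c r (col p) (row p) q := by
        rw [hcpq, hrpq]; exact ⟨(hcol q).1, (hcol q).2, (hrow q).1, (hrow q).2⟩
      have bx : InBlock π c r (col p) (row p) x := by
        rw [← hx, ← hxr]; exact ⟨(hcol x).1, (hcol x).2, (hrow x).1, (hrow x).2⟩
      have hxc : (x < p ∧ x < q) ∨ (p < x ∧ q < x) := by
        rcases lt_or_gt_of_ne hxp with h | h
        · left; exact ⟨h, by order⟩
        · right
          refine ⟨h, ?_⟩
          rw [Fin.lt_def] at *
          have : x.val ≠ q.val := fun h => hxq (Fin.ext h)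
          omega
      have hMM := hne p
      obtain ⟨g1, g2, -⟩ := hg (col p) (row p)
      rcases SignType.trichotomy (M (col p) (row p)) with h | h | h
      · have g2 := g2 h
        rcases hxc with ⟨h1, h2⟩ | ⟨h1, h2⟩
        · exact iff_of_true (g2 _ _ bx bp h1) (g2 _ _ bx bq h2)
        · have := g2 _ _ bp bx h1
          have := g2 _ _ bq bx h2
          exact iff_of_false (by order) (by order)
      · exact absurd h hMM
      · have g1 := g1 h
        rcases hxc with ⟨h1, h2⟩ | ⟨h1, h2⟩
        · have := g1 _ _ bx bp h1
          have := g1 _ _ bx bq h2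
          exact iff_of_false (by order) (by order)
        · exact iff_of_true (g1 _ _ bp bx h1) (g1 _ _ bq bx h2)
    · have hxr : row p ≠ row x := fun h => hx ((hrc p x).1 h).symm
      have hp := hrow p
      have hq := hrow q
      rw [← hrpq] at hq
      have h1 : ¬ (r (row p).castSucc ≤ π x ∧ (π x : ℕ) < r (row p).succ) := fun h =>
        hxr (hrl x _ h.1 h.2)
      rw [Fin.lt_def, Fin.lt_def]
      omega
  have hmono : ∀ i i' : Fin n, i < i' → col i ≤ col i' := by
    intro i i' h
    by_contra hlt
    rw [not_le] at hlt
    have : c (col i').succ ≤ c (col i).castSucc := hc (by rw [Fin.le_def, Fin.lt_def] at *; simp; omega)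
    have := (hcol i).1
    have := (hcol i').2
    rw [Fin.lt_def] at h
    omega
  have key : ∀ i ∈ NB π, ∀ i', i < i' → col i < col i' := by
    intro i hi i' hii
    rw [mem_NB] at hi
    obtain ⟨q, hq, hb⟩ := hi
    have h1 := hmono i q (by rw [Fin.lt_def]; omega)
    have h2 : col i ≠ col q := fun h => hb (hbond _ _ hq h)
    have h3 : col q ≤ col i' := by
      rcases (show q ≤ i' by rw [Fin.le_def]; rw [Fin.lt_def] at hii; omega).lt_or_eq with h | h
      · exact hmono _ _ h
      · rw [h]
    order
  calc (NB π).card ≤ (Finset.univ : Finset (Fin t)).card := by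
        refine Finset.card_le_card_of_injOn col (fun _ _ => Finset.mem_coe.2 (Finset.mem_univ _)) ?_
        intro i hi i' hi' he
        rcases lt_trichotomy i i' with h | h | h
        · exact absurd he (key i hi i' h).ne
        · exact h
        · exact absurd he (key i' hi' i h).ne'
    _ = t := by simp

open Classical in
/-- `π` is the inflation of `ρ` with signs `s`, lengths `a` and block map `g`. -/
def PRep {m n : ℕ} (ρ : Equiv.Perm (Fin m)) (s : Fin m → Bool) (a : Fin m → ℕ)
    (π : Equiv.Perm (Fin n)) (g : Fin n → Fin m) : Prop :=
  Monotone g ∧ (∀ j, (Finset.univ.filter (fun i => g i = j)).card = a j) ∧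
    ∀ i i', π i < π i' ↔
      ρ (g i) < ρ (g i') ∨ (g i = g i' ∧ if s (g i) = true then i < i' else i' < i)

theorem card_fiber_sum {m n : ℕ} (a : Fin m → ℕ) (g : Fin n → Fin m)
    (ha : ∀ j, (Finset.univ.filter (fun i => g i = j)).card = a j) (T : Finset (Fin m)) :
    (Finset.univ.filter (fun i => g i ∈ T)).card = ∑ j ∈ T, a j := by
  rw [Finset.card_eq_sum_card_fiberwise (f := g) (t := T) (fun i hi => by simpa using hi)]
  refine Finset.sum_congr rfl fun j hj => ?_
  rw [← ha j, Finset.filter_filter]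
  congr 1
  ext i
  simp only [Finset.mem_filter, Finset.mem_univ, true_and]
  exact ⟨fun h => h.2, fun h => ⟨h ▸ hj, h⟩⟩

/-- starting position of block `j` -/
def blockStart {m : ℕ} (a : Fin m → ℕ) (j : Fin m) : ℕ := ∑ k ∈ Finset.Iio j, a k

theorem blockStart_add_le {m : ℕ} (a : Fin m → ℕ) {j k : Fin m} (h : j < k) :
    blockStart a j + a j ≤ blockStart a k := by
  unfold blockStart
  rw [add_comm, ← Finset.sum_insert (s := Finset.Iio j) (a := j) (f := a) (by simp)]
  refine Finset.sum_le_sum_of_subset ?_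
  intro x hx
  simp at hx ⊢
  exact lt_of_le_of_lt hx h

theorem blockStart_add_le_sum {m : ℕ} (a : Fin m → ℕ) (j : Fin m) :
    blockStart a j + a j ≤ ∑ k, a k := by
  unfold blockStart
  rw [add_comm, ← Finset.sum_insert (s := Finset.Iio j) (a := j) (f := a) (by simp)]
  exact Finset.sum_le_sum_of_subset (Finset.subset_univ _)

theorem fiber_bounds {m n : ℕ} (a : Fin m → ℕ) (g : Fin n → Fin m) (hg : Monotone g)
    (ha : ∀ j, (Finset.univ.filter (fun i => g i = j)).card = a j) (i : Fin n) (j : Fin m) :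
    g i = j ↔ blockStart a j ≤ i ∧ (i : ℕ) < blockStart a j + a j := by
  have h1 : (i : ℕ) < blockStart a j ↔ g i < j := by
    have := Tuple.lt_card_lt_iff_apply_lt_of_monotone (j := i) (a := j) hg
    rw [← this, blockStart, ← card_fiber_sum a g ha]
    simp
  have h2 : (i : ℕ) < blockStart a j + a j ↔ g i ≤ j := by
    have := Tuple.lt_card_le_iff_apply_le_of_monotone (j := i) (a := j) hg
    rw [← this, blockStart, add_comm,
      ← Finset.sum_insert (s := Finset.Iio j) (a := j) (f := a) (by simp),
      ← card_fiber_sum a g ha]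
    simp [le_iff_eq_or_lt]
  rw [h2, ← not_lt, h1, not_lt]
  exact ⟨fun h => ⟨h.ge, h.le⟩, fun h => le_antisymm h.2 h.1⟩

theorem PRep.sum_eq {m n : ℕ} {ρ : Equiv.Perm (Fin m)} {s : Fin m → Bool} {a : Fin m → ℕ}
    {π : Equiv.Perm (Fin n)} {g : Fin n → Fin m} (h : PRep ρ s a π g) : ∑ j, a j = n := by
  rw [← card_fiber_sum a g (by convert h.2.1)]
  simp

theorem PRep.unique {m n : ℕ} {ρ : Equiv.Perm (Fin m)} {s : Fin m → Bool} {a : Fin m → ℕ}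
    {π π' : Equiv.Perm (Fin n)} {g g' : Fin n → Fin m} (h : PRep ρ s a π g)
    (h' : PRep ρ s a π' g') : π = π' := by
  have hg : g = g' := by
    funext i
    symm
    rw [fiber_bounds a g' h'.1 (by convert h'.2.1), ← fiber_bounds a g h.1 (by convert h.2.1)]
  subst hg
  apply perm_ext_of_lt
  intro i j
  rw [h.2.2, h'.2.2]

theorem exists_rep {m n : ℕ} (ρ : Equiv.Perm (Fin m)) (s : Fin m → Bool) (a : Fin m → ℕ)
    (hn : ∑ j, a j = n) : ∃ (π : Equiv.Perm (Fin n)) (g : Fin n → Fin m), PRep ρ s a π g := by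
  classical
  subst hn
  set g0 : Fin (∑ j, a j) → Fin m := fun i => (finSigmaFinEquiv.symm i).1 with hg0
  have hc0 : ∀ j, (Finset.univ.filter (fun i => g0 i = j)).card = a j := by
    intro j
    have : (Finset.univ.filter (fun i => g0 i = j)) =
        Finset.univ.image (fun x : Fin (a j) => finSigmaFinEquiv ⟨j, x⟩) := by
      ext i
      simp only [Finset.mem_filter, Finset.mem_univ, true_and, Finset.mem_image]
      constructor
      · rintro rfl
        exact ⟨(finSigmaFinEquiv.symm i).2, finSigmaFinEquiv.apply_symm_apply i⟩
      · rintro ⟨x, rfl⟩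
        simp [hg0]
    rw [this, Finset.card_image_of_injective]
    · simp
    · intro x y hxy
      simpa using hxy
  set g := g0 ∘ Tuple.sort g0
  have hgm : Monotone g := Tuple.monotone_sort g0
  have hc : ∀ j, (Finset.univ.filter (fun i => g i = j)).card = a j := by
    intro j
    rw [← hc0 j]
    refine Finset.card_bij (fun i _ => Tuple.sort g0 i) ?_ ?_ ?_
    · intro i hi
      simpa [g] using hi
    · intro i _ i' _ h
      simpa using h
    · intro i hi
      refine ⟨(Tuple.sort g0).symm i, ?_, by simp⟩
      simpa [g] using hi
  set w : Fin (∑ j, a j) → Fin m ×ₗ ℤ :=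
    fun i => toLex (ρ (g i), if s (g i) = true then (i : ℤ) else -(i : ℤ)) with hw
  have hwinj : Function.Injective w := by
    intro i i' h
    simp only [hw, EmbeddingLike.apply_eq_iff_eq, Prod.mk.injEq] at h
    obtain ⟨h1, h2⟩ := h
    rw [h1] at h2
    apply Fin.ext
    split_ifs at h2 <;> omega
  obtain ⟨π, hπ⟩ := exists_std w hwinj
  refine ⟨π, g, hgm, by convert hc, fun i i' => ?_⟩
  rw [hπ, hw, Prod.Lex.toLex_lt_toLex]
  simp only [EmbeddingLike.apply_eq_iff_eq]
  refine or_congr Iff.rfl (and_congr_right fun h => ?_)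
  rw [← h]
  split_ifs <;> rw [Fin.lt_def] <;> omega

theorem PRep.contains {m n n' : ℕ} {ρ : Equiv.Perm (Fin m)} {s : Fin m → Bool} {a a' : Fin m → ℕ}
    {π : Equiv.Perm (Fin n)} {π' : Equiv.Perm (Fin n')} {g : Fin n → Fin m} {g' : Fin n' → Fin m}
    (h : PRep ρ s a π g) (h' : PRep ρ s a' π' g') (hle : a ≤ a') : PermContains π π' := by
  have hb := fun i j => fiber_bounds a g h.1 (by convert h.2.1) i j
  have hb' := fun i j => fiber_bounds a' g' h'.1 (by convert h'.2.1) i j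
  have hs := h'.sum_eq
  have hbi := fun i => (hb i (g i)).1 rfl
  set F : Fin n → Fin n' := fun i => ⟨i.val - blockStart a (g i) + blockStart a' (g i), by
    have h1 := hbi i
    have h2 : a (g i) ≤ a' (g i) := hle (g i)
    have h3 := blockStart_add_le_sum a' (g i)
    omega⟩ with hF
  have hFv : ∀ i, (F i).val = i.val - blockStart a (g i) + blockStart a' (g i) := fun _ => rfl
  have hgF : ∀ i, g' (F i) = g i := by
    intro i
    rw [hb', hFv]
    have h1 := hbi i
    have h2 : a (g i) ≤ a' (g i) := hle (g i)
    omega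
  have hFm : StrictMono F := by
    intro i i' hii
    have h1 := hbi i
    have h2 := hbi i'
    rw [Fin.lt_def] at hii ⊢
    rw [hFv, hFv]
    rcases (h.1 (show i ≤ i' from hii.le)).lt_or_eq with hlt | heq
    · have := blockStart_add_le a' hlt
      have h3 : a (g i) ≤ a' (g i) := hle (g i)
      omega
    · rw [← heq] at h2 ⊢
      omega
  refine ⟨F, hFm, fun i j => ?_⟩
  rw [h.2.2, h'.2.2, hgF, hgF, hFm.lt_iff_lt, hFm.lt_iff_lt]

/-- normalised data -/
def GoodRep {m : ℕ} (s : Fin m → Bool) (a : Fin m → ℕ) : Prop :=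
  ∀ j, 1 ≤ a j ∧ (a j = 1 → s j = true)

theorem exists_good_rep {m n : ℕ} (hn : 0 < n) (π : Equiv.Perm (Fin n)) (hm : (NB π).card = m) :
    ∃ (ρ : Equiv.Perm (Fin (m + 1))) (s : Fin (m + 1) → Bool) (a : Fin (m + 1) → ℕ)
      (g : Fin n → Fin (m + 1)), PRep ρ s a π g ∧ GoodRep s a := by
  classical
  set c : Fin n → ℕ := fun i => ((NB π).filter (· < i)).card with hc
  have hcm : ∀ i, c i < m + 1 := fun i => by
    have := Finset.card_filter_le (NB π) (· < i)
    simp only [hc]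
    omega
  set g : Fin n → Fin (m + 1) := fun i => ⟨c i, hcm i⟩ with hg
  have hmono : Monotone g := by
    intro i j hij
    rw [Fin.le_def]
    change c i ≤ c j
    refine Finset.card_le_card ?_
    intro x hx
    simp only [Finset.mem_filter] at hx ⊢
    exact ⟨hx.1, by order⟩
  have hno : ∀ i i', g i = g i' → ∀ p, i ≤ p → p < i' → p ∉ NB π := by
    intro i i' he p h1 h2 hp
    have : c i < c i' := by
      refine Finset.card_lt_card ⟨?_, ?_⟩
      · intro x hx
        simp only [Finset.mem_filter] at hx ⊢
        exact ⟨hx.1, by order⟩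
      · intro hsub
        have := hsub (Finset.mem_filter.2 ⟨hp, h2⟩)
        simp only [Finset.mem_filter] at this
        order
    have := congrArg Fin.val he
    simp only [hg] at this
    omega
  have hsurj : Function.Surjective g := by
    have hall : ∀ (v : ℕ) (hv : v < n) (j : ℕ), j ≤ c ⟨v, hv⟩ → ∃ i, c i = j := by
      intro v
      induction v with
      | zero =>
        intro hv j hj
        refine ⟨⟨0, hv⟩, ?_⟩
        have : c ⟨0, hv⟩ = 0 := by
          simp only [hc, Finset.card_eq_zero, Finset.filter_eq_empty_iff]
          intro x _
          rw [Fin.lt_def]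
          simp
        omega
      | succ v ih =>
        intro hv j hj
        have hle : c ⟨v + 1, hv⟩ ≤ c ⟨v, by omega⟩ + 1 := by
          simp only [hc]
          refine le_trans (Finset.card_le_card (t := insert ⟨v, by omega⟩ _) ?_)
            (Finset.card_insert_le _ _)
          intro x hx
          simp only [Finset.mem_filter, Finset.mem_insert] at hx ⊢
          by_cases hxv : x.val = v
          · exact Or.inl (Fin.ext hxv)
          · refine Or.inr ⟨hx.1, ?_⟩
            have := hx.2
            rw [Fin.lt_def] at this ⊢
            simp only at this ⊢
            omega
        rcases Nat.lt_or_ge (c ⟨v, by omega⟩) j with h | h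
        · exact ⟨⟨v + 1, hv⟩, by omega⟩
        · exact ih _ j h
    intro j
    have hlast : c ⟨n - 1, by omega⟩ = m := by
      simp only [hc]
      rw [← hm]
      congr 1
      rw [Finset.filter_eq_self]
      intro x hx
      rw [mem_NB] at hx
      obtain ⟨q, hq, -⟩ := hx
      rw [Fin.lt_def]
      simp only
      omega
    obtain ⟨i, hi⟩ := hall (n - 1) (by omega) j (by rw [hlast]; omega)
    exact ⟨i, Fin.ext hi⟩
  choose r hr using hsurj
  have hrinj : Function.Injective (fun j => π (r j)) := by
    intro j j' h
    have := π.injective h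
    rw [← hr j, ← hr j', this]
  obtain ⟨ρ, hρ⟩ := exists_std _ hrinj
  have hout : ∀ i k x, g i = g k → g i ≠ g x → (π i < π x ↔ π k < π x) := by
    have main : ∀ i k x, i ≤ k → g i = g k → g i ≠ g x → (π i < π x ↔ π k < π x) := by
      intro i k x hik he hne
      refine bond_chain π i k hik (hno i k he) x ?_
      by_contra hcon
      push Not at hcon
      have h1 := hmono hcon.1
      have h2 := hmono hcon.2
      exact hne (le_antisymm h1 (by rw [he]; exact h2))
    intro i k x he hne
    rcases le_total i k with h | h
    · exact main i k x h he hne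
    · exact (main k i x h he.symm (by rwa [← he])).symm
  have hsgn : ∀ i i' k k', g i = g i' → g k = g k' → g i = g k → i < i' → k < k' →
      (π i < π i' ↔ π k < π k') := by
    intro i i' k k' e1 e2 e3 h1 h2
    have he : g (min i k) = g (max i' k') := by
      rcases min_choice i k with h | h <;> rcases max_choice i' k' with h' | h' <;> rw [h, h'] <;>
        simp [← e1, ← e2, e3]
    have hnb := hno _ _ he
    rw [bond_sign π (min i k) (max i' k') i i' hnb (min_le_left _ _) h1 (le_max_left _ _),
      bond_sign π (min i k) (max i' k') k k' hnb (min_le_right _ _) h2 (le_max_right _ _)]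
  set s : Fin (m + 1) → Bool :=
    fun j => decide (∀ i i', g i = j → g i' = j → i < i' → π i < π i') with hs
  have hs' : ∀ i i', i < i' → g i = g i' → (s (g i) = true ↔ π i < π i') := by
    intro i i' h he
    simp only [hs, decide_eq_true_eq]
    constructor
    · intro hall
      exact hall i i' rfl he.symm h
    · intro hlt k k' hk hk' hkk
      exact (hsgn i i' k k' he (hk.trans hk'.symm) hk.symm h hkk).1 hlt
  refine ⟨ρ, s, fun j => (Finset.univ.filter (fun i => g i = j)).card, g,
    ⟨hmono, fun j => by congr, ?_⟩, ?_⟩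
  · intro i i'
    by_cases he : g i = g i'
    · rw [← he]
      simp only [lt_self_iff_false, true_and, false_or]
      rcases lt_trichotomy i i' with h | h | h
      · rw [← hs' i i' h he]
        split_ifs with h1
        · simp [h1, h]
        · simp [h1, h.le]
      · subst h; simp
      · rw [← perm_not_lt π h.ne, ← hs' i' i h he.symm, ← he]
        split_ifs with h1
        · simp [h1, h.le]
        · simp [h1, h]
    · simp only [he, false_and, or_false]
      rw [hρ]
      rw [hout i (r (g i)) i' (hr _).symm he]
      rw [← perm_not_lt π (x := i') (by intro h; apply he; rw [h, hr]),
        ← perm_not_lt π (x := r (g i')) (by intro h; apply he; rw [← hr (g i'), h, hr]),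
        hout i' (r (g i')) (r (g i)) (hr _).symm (by rw [hr]; exact fun h => he h.symm)]
  · intro j
    refine ⟨Finset.card_pos.2 ⟨r j, by simp [hr]⟩, fun h1 => ?_⟩
    simp only [hs, decide_eq_true_eq]
    intro i i' hi hi' hlt
    rw [Finset.card_eq_one] at h1
    obtain ⟨x, hx⟩ := h1
    have m1 : i ∈ ({x} : Finset (Fin n)) := by rw [← hx]; simp [hi]
    have m2 : i' ∈ ({x} : Finset (Fin n)) := by rw [← hx]; simp [hi']
    rw [Finset.mem_singleton] at m1 m2
    exact absurd (m1.trans m2.symm) hlt.ne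

theorem PRep.bond {m n : ℕ} {ρ : Equiv.Perm (Fin m)} {s : Fin m → Bool} {a : Fin m → ℕ}
    {π : Equiv.Perm (Fin n)} {g : Fin n → Fin m} (h : PRep ρ s a π g) {p q : Fin n}
    (hq : q.val = p.val + 1) (he : g p = g q) : IsBond π p q := by
  intro x hxp hxq
  rw [h.2.2, h.2.2, he]
  have e1 : x.val ≠ p.val := fun h => hxp (Fin.ext h)
  have e2 : x.val ≠ q.val := fun h => hxq (Fin.ext h)
  refine or_congr Iff.rfl (and_congr_right fun _ => ?_)
  split_ifs <;> rw [Fin.lt_def, Fin.lt_def] <;> omega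

theorem PRep.jump {m n : ℕ} {ρ : Equiv.Perm (Fin (m + 1))} {s : Fin (m + 1) → Bool}
    {a : Fin (m + 1) → ℕ} {π : Equiv.Perm (Fin n)} {g : Fin n → Fin (m + 1)}
    (h : PRep ρ s a π g) (hm : (NB π).card = m) {p q : Fin n}
    (hq : q.val = p.val + 1) : g p ≠ g q ↔ p ∈ NB π := by
  classical
  set J : Finset (Fin n) :=
    Finset.univ.filter (fun p => ∃ q : Fin n, q.val = p.val + 1 ∧ g p ≠ g q) with hJ
  have hsub : NB π ⊆ J := by
    intro x hx
    rw [mem_NB] at hx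
    obtain ⟨y, hy, hb⟩ := hx
    simp only [hJ, Finset.mem_filter, Finset.mem_univ, true_and]
    exact ⟨y, hy, fun he => hb (h.bond hy he)⟩
  have hlt : ∀ x ∈ J, ∀ y, x < y → g x < g y := by
    intro x hx y hxy
    simp only [hJ, Finset.mem_filter, Finset.mem_univ, true_and] at hx
    obtain ⟨z, hz, hne⟩ := hx
    have h1 : g x ≤ g z := h.1 (by rw [Fin.le_def]; omega)
    have h2 : g z ≤ g y := h.1 (by rw [Fin.le_def]; rw [Fin.lt_def] at hxy; omega)
    order
  have hcard : J.card ≤ m := by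
    calc J.card ≤ (Finset.range m).card := by
          refine Finset.card_le_card_of_injOn (fun x => (g x).val) ?_ ?_
          · intro x hx
            have hx' := hx
            simp only [hJ, Finset.coe_filter, Finset.mem_univ, true_and, Set.mem_ofPred_eq] at hx'
            obtain ⟨z, hz, hne⟩ := hx'
            have := hlt x hx z (by rw [Fin.lt_def]; omega)
            rw [Fin.lt_def] at this
            have := (g z).2
            simp
            omega
          · intro x hx y hy he
            have he' := Fin.ext he
            rcases lt_trichotomy x y with h | h | h
            · exact absurd he' (hlt x hx y h).ne
            · exact h
            · exact absurd he' (hlt y hy x h).ne'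
      _ = m := by simp
  have heq : NB π = J := Finset.eq_of_subset_of_card_le hsub (by omega)
  rw [heq]
  simp only [hJ, Finset.mem_filter, Finset.mem_univ, true_and]
  constructor
  · intro hne
    exact ⟨q, hq, hne⟩
  · rintro ⟨z, hz, hne⟩
    have : z = q := Fin.ext (by omega)
    rwa [← this]

theorem PRep.surj {m n : ℕ} {ρ : Equiv.Perm (Fin m)} {s : Fin m → Bool} {a : Fin m → ℕ}
    {π : Equiv.Perm (Fin n)} {g : Fin n → Fin m} (h : PRep ρ s a π g) (hg : GoodRep s a) :
    Function.Surjective g := by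
  intro j
  have h1 := (hg j).1
  rw [← h.2.1 j] at h1
  obtain ⟨i, hi⟩ := Finset.card_pos.1 h1
  exact ⟨i, by simpa using hi⟩

theorem PRep.data_unique {m n : ℕ} {ρ ρ' : Equiv.Perm (Fin (m + 1))} {s s' : Fin (m + 1) → Bool}
    {a a' : Fin (m + 1) → ℕ} {π : Equiv.Perm (Fin n)} {g g' : Fin n → Fin (m + 1)}
    (h : PRep ρ s a π g) (h' : PRep ρ' s' a' π g') (hg : GoodRep s a) (hg' : GoodRep s' a')
    (hm : (NB π).card = m) : ρ = ρ' ∧ s = s' ∧ a = a' := by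
  classical
  have hsu := h.surj hg
  have hsu' := h'.surj hg'
  have zero : ∀ (f : Fin n → Fin (m + 1)) (_ : Monotone f) (_ : Function.Surjective f)
      (hn : 0 < n), f ⟨0, hn⟩ = 0 := by
    intro f hf hs hn
    obtain ⟨i, hi⟩ := hs 0
    have : f ⟨0, hn⟩ ≤ f i := hf (by rw [Fin.le_def]; simp)
    rw [hi] at this
    exact le_antisymm this (Fin.zero_le _)
  have step : ∀ (f : Fin n → Fin (m + 1)) (_ : Monotone f) (_ : Function.Surjective f)
      (p q : Fin n) (_ : q.val = p.val + 1), f p ≠ f q → (f q).val = (f p).val + 1 := by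
    intro f hf hs p q hpq hne
    have hle : f p ≤ f q := hf (by rw [Fin.le_def]; omega)
    have hlt : f p < f q := lt_of_le_of_ne hle hne
    rw [Fin.lt_def] at hlt
    obtain ⟨i, hi⟩ := hs ⟨(f p).val + 1, by omega⟩
    have hqi : q ≤ i := by
      by_contra hc
      rw [Fin.le_def] at hc
      have h1 : f i ≤ f p := hf (by rw [Fin.le_def]; omega)
      rw [hi, Fin.le_def] at h1
      simp at h1
    have h2 := hf hqi
    rw [hi, Fin.le_def] at h2
    simp only at h2
    omega
  have hgg : ∀ (v : ℕ) (hv : v < n), g ⟨v, hv⟩ = g' ⟨v, hv⟩ := by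
    intro v
    induction v with
    | zero => intro hv; rw [zero g h.1 hsu, zero g' h'.1 hsu']
    | succ v ih =>
      intro hv
      have ih := ih (by omega)
      have j1 := h.jump hm (p := ⟨v, by omega⟩) (q := ⟨v + 1, hv⟩) rfl
      have j2 := h'.jump hm (p := ⟨v, by omega⟩) (q := ⟨v + 1, hv⟩) rfl
      by_cases hb : (⟨v, by omega⟩ : Fin n) ∈ NB π
      · have s1 := step g h.1 hsu ⟨v, by omega⟩ ⟨v + 1, hv⟩ rfl (j1.2 hb)
        have s2 := step g' h'.1 hsu' ⟨v, by omega⟩ ⟨v + 1, hv⟩ rfl (j2.2 hb)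
        apply Fin.ext
        rw [s1, s2, ih]
      · rw [← j1, not_not] at hb
        have hb' := hb
        rw [← not_iff_not, not_not] at j1 j2
        rw [← hb, ih]
        exact j2.2 (j1.1 hb)
  have hgeq : g = g' := funext fun i => hgg i.1 i.2
  subst hgeq
  have haeq : a = a' := by
    funext j
    rw [← h.2.1 j, ← h'.2.1 j]
  subst haeq
  refine ⟨?_, ?_, rfl⟩
  · apply perm_ext_of_lt
    intro x y
    obtain ⟨i, rfl⟩ := hsu x
    obtain ⟨j, rfl⟩ := hsu y
    by_cases he : g i = g j
    · simp [he]
    · have h1 := h.2.2 i j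
      have h2 := h'.2.2 i j
      simp only [he, false_and, or_false] at h1 h2
      rw [← h1, h2]
  · funext j
    by_cases h1 : a j = 1
    · rw [(hg j).2 h1, (hg' j).2 h1]
    · have h2 : 1 < (Finset.univ.filter (fun i => g i = j)).card := by
        have h3 := (hg j).1
        have h4 : (Finset.univ.filter (fun i => g i = j)).card = a j := by
          convert h.2.1 j
        omega
      obtain ⟨i, hi, i', hi', hne⟩ := Finset.one_lt_card.1 h2
      simp only [Finset.mem_filter, Finset.mem_univ, true_and] at hi hi'
      have e1 := h.2.2 i i'
      have e2 := h'.2.2 i i'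
      rw [hi, hi'] at e1 e2
      simp only [lt_self_iff_false, true_and, false_or] at e1 e2
      rw [e1] at e2
      cases hs : s j <;> cases hs' : s' j <;> simp [hs, hs'] at e2 ⊢ <;>
        rw [Fin.lt_def, Fin.lt_def] at e2 <;> exact hne (Fin.ext (by omega))

/-- length vectors whose inflation lies in `D` -/
def lenSet {m : ℕ} (D : ∀ n : ℕ, Set (Equiv.Perm (Fin n))) (ρ : Equiv.Perm (Fin m))
    (s : Fin m → Bool) : Set (Fin m → ℕ) :=
  {a | ∃ (n : ℕ) (π : Equiv.Perm (Fin n)) (g : Fin n → Fin m), π ∈ D n ∧ PRep ρ s a π g}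

theorem lenSet_isLowerSet {m : ℕ} (D : ∀ n : ℕ, Set (Equiv.Perm (Fin n))) (hD : IsPermClass D)
    (ρ : Equiv.Perm (Fin m)) (s : Fin m → Bool) : IsLowerSet (lenSet D ρ s) := by
  rintro a b hba ⟨n, π, g, hπ, hr⟩
  obtain ⟨σ, g', hσ⟩ := exists_rep ρ s b rfl
  exact ⟨_, σ, g', hD _ _ σ π hπ (hσ.contains hr hba), hσ⟩

theorem mem_lenSet_iff {m n : ℕ} {D : ∀ n : ℕ, Set (Equiv.Perm (Fin n))} {ρ : Equiv.Perm (Fin m)}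
    {s : Fin m → Bool} {a : Fin m → ℕ} {π : Equiv.Perm (Fin n)} {g : Fin n → Fin m}
    (h : PRep ρ s a π g) : a ∈ lenSet D ρ s ↔ π ∈ D n := by
  constructor
  · rintro ⟨n', π', g', hπ, hr⟩
    have : n' = n := by rw [← hr.sum_eq, h.sum_eq]
    subst this
    rw [h.unique hr]
    exact hπ
  · intro hπ
    exact ⟨n, π, g, hπ, h⟩

/-- members of `C` with fewer than `k` non-bonds -/
def subC (C : ∀ n : ℕ, Set (Equiv.Perm (Fin n))) (k : ℕ) : ∀ n : ℕ, Set (Equiv.Perm (Fin n)) :=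
  fun n => {π | π ∈ C n ∧ (NB π).card < k}

theorem subC_isPermClass {C : ∀ n : ℕ, Set (Equiv.Perm (Fin n))} (hC : IsPermClass C) (k : ℕ) :
    IsPermClass (subC C k) := by
  intro l n σ π hπ h
  exact ⟨hC _ _ σ π hπ.1 h, lt_of_le_of_lt (NB_mono σ π h) hπ.2⟩

/-- normalised length vectors of members of `C` with exactly `m` non-bonds -/
def vecSet (C : ∀ n : ℕ, Set (Equiv.Perm (Fin n))) (m : ℕ) (ρ : Equiv.Perm (Fin (m + 1)))
    (s : Fin (m + 1) → Bool) : Set (Fin (m + 1) → ℕ) :=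
  ({a | GoodRep s a} ∩ lenSet (subC C (m + 1)) ρ s) ∩ (lenSet (subC C m) ρ s)ᶜ

theorem goodRep_evConst {m : ℕ} (s : Fin m → Bool) : EvConst {a | GoodRep s a} := by
  refine ⟨2, fun K hK a => ?_⟩
  refine forall_congr' fun j => ?_
  have h1 : 1 ≤ a j ↔ 1 ≤ min (a j) K := by omega
  have h2 : a j = 1 ↔ min (a j) K = 1 := by omega
  rw [h1, h2]

theorem vecSet_evConst {C : ∀ n : ℕ, Set (Equiv.Perm (Fin n))} (hC : IsPermClass C) (m : ℕ)
    (ρ : Equiv.Perm (Fin (m + 1))) (s : Fin (m + 1) → Bool) : EvConst (vecSet C m ρ s) :=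
  ((goodRep_evConst s).inter
    (EvConst.of_isLowerSet (lenSet_isLowerSet _ (subC_isPermClass hC _) ρ s))).inter
    (EvConst.of_isLowerSet (lenSet_isLowerSet _ (subC_isPermClass hC _) ρ s)).compl

theorem mem_vecSet_iff {C : ∀ n : ℕ, Set (Equiv.Perm (Fin n))} {m n : ℕ}
    {ρ : Equiv.Perm (Fin (m + 1))} {s : Fin (m + 1) → Bool} {a : Fin (m + 1) → ℕ}
    {π : Equiv.Perm (Fin n)} {g : Fin n → Fin (m + 1)} (h : PRep ρ s a π g) :
    a ∈ vecSet C m ρ s ↔ GoodRep s a ∧ π ∈ C n ∧ (NB π).card = m := by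
  have h1 := mem_lenSet_iff (D := subC C (m + 1)) h
  have h2 := mem_lenSet_iff (D := subC C m) h
  have h3 : a ∈ vecSet C m ρ s ↔ (GoodRep s a ∧ a ∈ lenSet (subC C (m + 1)) ρ s) ∧
    ¬ a ∈ lenSet (subC C m) ρ s := Iff.rfl
  rw [h3, h1, h2]
  have h4 : ∀ k, π ∈ subC C k n ↔ π ∈ C n ∧ (NB π).card < k := fun _ => Iff.rfl
  rw [h4, h4]
  constructor
  · rintro ⟨⟨a1, a2, a3⟩, a4⟩
    refine ⟨a1, a2, ?_⟩
    by_contra hne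
    exact a4 ⟨a2, by omega⟩
  · rintro ⟨a1, a2, a3⟩
    exact ⟨⟨a1, a2, by omega⟩, fun h => by omega⟩

theorem card_eq_sum {C : ∀ n : ℕ, Set (Equiv.Perm (Fin n))} {t : ℕ}
    (ht : ∀ n, ∀ π ∈ C n, (NB π).card ≤ t) {n : ℕ} (hn : 0 < n) :
    Nat.card (C n) = ∑ m : Fin (t + 1),
      ∑ x : Equiv.Perm (Fin (m.val + 1)) × (Fin (m.val + 1) → Bool),
        Nat.card {a : Fin (m.val + 1) → ℕ // a ∈ vecSet C m x.1 x.2 ∧ ∑ j, a j = n} := by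
  classical
  have hfin : ∀ (k : ℕ) (S : Set (Fin k → ℕ)), Finite {a : Fin k → ℕ // a ∈ S ∧ ∑ j, a j = n} := by
    intro k S
    refine Set.Finite.subset (Finset.finite_toSet (Finset.piAntidiag Finset.univ n)) ?_
    intro a ha
    have := ha.2
    simpa using this
  let T := Σ m : Fin (t + 1), Σ x : Equiv.Perm (Fin (m.val + 1)) × (Fin (m.val + 1) → Bool),
        {a : Fin (m.val + 1) → ℕ // a ∈ vecSet C m x.1 x.2 ∧ ∑ j, a j = n}
  have hT : Nat.card T = ∑ m : Fin (t + 1),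
      ∑ x : Equiv.Perm (Fin (m.val + 1)) × (Fin (m.val + 1) → Bool),
        Nat.card {a : Fin (m.val + 1) → ℕ // a ∈ vecSet C m x.1 x.2 ∧ ∑ j, a j = n} := by
    rw [Nat.card_sigma]
    refine Finset.sum_congr rfl fun m _ => ?_
    rw [Nat.card_sigma]
  rw [← hT]
  have hex : ∀ y : T, ∃ π : Equiv.Perm (Fin n), ∃ g,
      PRep y.2.1.1 y.2.1.2 y.2.2.1 π g := fun y => exists_rep _ _ _ y.2.2.2.2
  choose F G hFG using hex
  have hmem : ∀ y : T, GoodRep y.2.1.2 y.2.2.1 ∧ F y ∈ C n ∧ (NB (F y)).card = y.1.val := fun y =>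
    (mem_vecSet_iff (hFG y)).1 y.2.2.2.1
  symm
  refine Nat.card_eq_of_bijective (fun y : T => (⟨F y, (hmem y).2.1⟩ : C n)) ⟨?_, ?_⟩
  · intro y z hyz
    have hF : F y = F z := congrArg Subtype.val hyz
    have hy := hmem y
    have hz := hmem z
    have ry := hFG y
    have rz := hFG z
    rw [hF] at hy ry
    obtain ⟨m, x, a, ha⟩ := y
    obtain ⟨m', x', a', ha'⟩ := z
    have hm : m = m' := Fin.ext (hy.2.2.symm.trans hz.2.2)
    subst hm
    obtain ⟨e1, e2, e3⟩ := ry.data_unique rz hy.1 hz.1 hz.2.2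
    obtain ⟨x1, x2⟩ := x
    obtain ⟨x1', x2'⟩ := x'
    dsimp only at e1 e2 e3
    subst e1 e2 e3
    rfl
  · rintro ⟨π, hπ⟩
    obtain ⟨ρ, s, a, g, hr, hgood⟩ := exists_good_rep hn π rfl
    refine ⟨⟨⟨(NB π).card, Nat.lt_succ_of_le (ht n π hπ)⟩, (ρ, s), a,
      (mem_vecSet_iff hr).2 ⟨hgood, hπ, rfl⟩, hr.sum_eq⟩, ?_⟩
    apply Subtype.ext
    exact (hFG ⟨⟨(NB π).card, Nat.lt_succ_of_le (ht n π hπ)⟩, (ρ, s), a,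
      (mem_vecSet_iff hr).2 ⟨hgood, hπ, rfl⟩, hr.sum_eq⟩).unique hr

/-- **Theorem.** If a permutation class lies in the grid class of a matching (a matrix whose
bipartite graph has maximum degree 1), then it has eventually polynomial enumeration. -/
theorem matching_grid_polynomial (t u : ℕ) (M : Fin t → Fin u → SignType)
    (hmatch : IsMatchingMat M)
    (C : ∀ n : ℕ, Set (Equiv.Perm (Fin n))) (hC : IsPermClass C)
    (hsub : ∀ n : ℕ, ∀ π ∈ C n, InGrid M π) :
    ∃ (p : Polynomial ℚ) (N : ℕ), ∀ n : ℕ, N ≤ n →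
      (Nat.card (C n) : ℚ) = p.eval (n : ℚ) := by
  have ht : ∀ n, ∀ π ∈ C n, (NB π).card ≤ t := fun n π hπ => NB_grid M hmatch π (hsub n π hπ)
  have hE := EvPoly.sum (Finset.univ : Finset (Fin (t + 1))) (fun m n =>
      ∑ x : Equiv.Perm (Fin (m.val + 1)) × (Fin (m.val + 1) → Bool),
        Nat.card {a : Fin (m.val + 1) → ℕ // a ∈ vecSet C m x.1 x.2 ∧ ∑ j, a j = n})
    (fun m _ => EvPoly.sum _ _ (fun x _ => (vecSet_evConst hC m x.1 x.2).evPoly))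
  obtain ⟨p, N, hp⟩ := hE
  refine ⟨p, N + 1, fun n hn => ?_⟩
  rw [card_eq_sum ht (by omega)]
  exact hp n (by omega)
end

section
/- Every sub-Fibonacci permutation class is griddable; equivalently, if a permutation class C satisfies |C_n| < F_n for some n (where F_n is the nth Fibonacci number with F_1 = F_2 = 1), then C is contained in Grid(M) for some matrix M with entries in {0, 1, −1}. -/
/-- Greedy splitting of `[s, n)` into good intervals, or many disjoint bad ones. -/
lemma greedy_split (P : ℕ → ℕ → Prop)
    (anti : ∀ x x' y y', x ≤ x' → y' ≤ y → P x y → P x' y')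
    (sing : ∀ x, P x (x + 1)) (n : ℕ) : ∀ k s, s ≤ n →
    (∃ d : ℕ → ℕ, Monotone d ∧ s ≤ d 0 ∧ d k ≤ n ∧ ∀ i < k, ¬ P (d i) (d (i + 1))) ∨
    ∃ f : ℕ → ℕ, Monotone f ∧ (∀ v, f v < 2 * k) ∧
      ∀ j, ∃ x y, P x y ∧ ∀ v, s ≤ v → v < n → f v = j → x ≤ v ∧ v < y := by
  intro k
  induction k with
  | zero =>
    intro s hs
    exact Or.inl ⟨fun _ => s, monotone_const, le_rfl, hs, by simp⟩
  | succ k ih =>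
    intro s hs
    by_cases hP : P s n
    · right
      refine ⟨fun _ => 0, monotone_const, fun _ => by dsimp only; omega, fun j => ⟨s, n, hP, ?_⟩⟩
      intro v h1 h2 _
      exact ⟨h1, h2⟩
    · classical
      have hex : ∃ m, ¬ P s m := ⟨n, hP⟩
      obtain ⟨m, hm, hmin⟩ : ∃ m, ¬ P s m ∧ ∀ m' < m, P s m' :=
        ⟨Nat.find hex, Nat.find_spec hex, fun m' h => not_not.1 (Nat.find_min hex h)⟩
      have hmn : m ≤ n := by
        by_contra h
        exact hP (hmin n (by omega))
      have hsm : s < m := by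
        by_contra h
        exact hm (anti s s (s + 1) m le_rfl (by omega) (sing s))
      rcases ih m hmn with ⟨d, hd, hd0, hdk, hdP⟩ | ⟨f, hf, hfk, hfP⟩
      · left
        refine ⟨fun i => if i = 0 then s else d (i - 1), ?_, ?_, ?_, ?_⟩
        · intro i j hij
          have h0 : d 0 ≤ d (j - 1) := hd (Nat.zero_le _)
          have h1 : d (i - 1) ≤ d (j - 1) := hd (by omega)
          dsimp only
          split_ifs <;> omega
        · simp
        · simpa using hdk
        · intro i hi
          rcases i with _ | i
          · simp only [if_true, Nat.zero_add]
            simp only [one_ne_zero, if_false]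
            intro h
            exact hm (anti _ _ _ _ le_rfl hd0 h)
          · simpa using hdP i (by omega)
      · right
        refine ⟨fun v => if v < m - 1 then 0 else if v = m - 1 then 1 else f v + 2, ?_, ?_, ?_⟩
        · intro i j hij
          have h1 := hf hij
          dsimp only
          split_ifs <;> omega
        · intro v
          have := hfk v
          dsimp only
          split_ifs <;> omega
        · intro j
          rcases j with _ | _ | j
          · refine ⟨s, m - 1, hmin _ (by omega), ?_⟩
            intro v h1 h2 h3
            dsimp only at h3
            split_ifs at h3 <;> omega
          · refine ⟨m - 1, m - 1 + 1, sing _, ?_⟩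
            intro v h1 h2 h3
            dsimp only at h3
            split_ifs at h3 <;> omega
          · obtain ⟨x, y, hxy, h⟩ := hfP j
            refine ⟨x, y, hxy, ?_⟩
            intro v h1 h2 h3
            dsimp only at h3
            split_ifs at h3
            · omega
            · exact h v (by omega) h2 (by omega)

/-- Choosing pairwise disjoint intervals, one from each family. -/
lemma rainbow (d : ℕ → ℕ → ℕ) (hd : ∀ p, Monotone (d p)) : ∀ (m : ℕ) (S : Finset ℕ) (s : ℕ),
    S.card = m → ∃ q : ℕ → ℕ, (∀ p ∈ S, s ≤ q p ∧ q p < s + m) ∧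
      ∀ p ∈ S, ∀ p' ∈ S, p ≠ p' →
        (q p < q p' ∨ q p' < q p) ∧ (q p < q p' → d p (q p + 1) ≤ d p' (q p')) := by
  intro m
  induction m with
  | zero =>
    intro S s hS
    rw [Finset.card_eq_zero] at hS
    subst hS
    exact ⟨fun _ => 0, by simp, by simp⟩
  | succ m ih =>
    intro S s hS
    have hne : S.Nonempty := by
      rw [← Finset.card_pos]; omega
    obtain ⟨p0, hp0, hmin⟩ := Finset.exists_min_image S (fun p => d p (s + 1)) hne
    obtain ⟨q, hq1, hq2⟩ := ih (S.erase p0) (s + 1) (by rw [Finset.card_erase_of_mem hp0]; omega)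
    refine ⟨fun p => if p = p0 then s else q p, ?_, ?_⟩
    · intro p hp
      by_cases h : p = p0
      · simp [h]
      · have := hq1 p (Finset.mem_erase.2 ⟨h, hp⟩)
        simp only [h, if_false]
        omega
    · intro p hp p' hp' hne
      by_cases h : p = p0
      · have h' : p' ≠ p0 := fun e => hne (h.trans e.symm)
        have h1 := hq1 p' (Finset.mem_erase.2 ⟨h', hp'⟩)
        simp only [h, h', if_true, if_false]
        refine ⟨by omega, fun _ => ?_⟩
        exact (hmin p' hp').trans (hd p' h1.1)
      · by_cases h' : p' = p0
        · have h1 := hq1 p (Finset.mem_erase.2 ⟨h, hp⟩)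
          simp only [h, h', if_true, if_false]
          exact ⟨by omega, fun _ => by omega⟩
        · simp only [h, h', if_false]
          exact hq2 p (Finset.mem_erase.2 ⟨h, hp⟩) p' (Finset.mem_erase.2 ⟨h', hp'⟩) hne

/-- A small Ramsey statement for lists. -/
lemma ramsey_list (r : ℕ → ℕ → Prop) : ∀ (m a b : ℕ) (L : List ℕ), a + b ≤ m →
    2 ^ m ≤ L.length →
    (∃ L' : List ℕ, L'.Sublist L ∧ L'.length = a ∧ L'.Pairwise r) ∨
    (∃ L' : List ℕ, L'.Sublist L ∧ L'.length = b ∧ L'.Pairwise (fun x y => ¬ r x y)) := by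
  classical
  intro m
  induction m with
  | zero =>
    intro a b L h _
    left
    exact ⟨[], List.nil_sublist _, by simp; omega, List.Pairwise.nil⟩
  | succ m ih =>
    intro a b L hab hL
    rcases a with _ | a
    · exact Or.inl ⟨[], List.nil_sublist _, rfl, List.Pairwise.nil⟩
    rcases b with _ | b
    · exact Or.inr ⟨[], List.nil_sublist _, rfl, List.Pairwise.nil⟩
    rcases L with _ | ⟨h, T⟩
    · simp at hL
    have hlen : T.length = (T.filter (fun x => decide (r h x))).length +
        (T.filter (fun x => !decide (r h x))).length := by
      exact List.length_eq_length_filter_add _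
    rw [List.length_cons, pow_succ] at hL
    by_cases hbig : 2 ^ m ≤ (T.filter (fun x => decide (r h x))).length
    · rcases ih a (b + 1) _ (by omega) hbig with ⟨L', h1, h2, h3⟩ | ⟨L', h1, h2, h3⟩
      · left
        refine ⟨h :: L', (h1.trans List.filter_sublist).cons_cons h, by simp [h2], ?_⟩
        refine List.Pairwise.cons ?_ h3
        intro x hx
        have := h1.subset hx
        simpa using (List.mem_filter.1 this).2
      · right
        exact ⟨L', (h1.trans List.filter_sublist).trans (List.sublist_cons_self _ _), h2, h3⟩
    · have hbig' : 2 ^ m ≤ (T.filter (fun x => !decide (r h x))).length := by omega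
      rcases ih (a + 1) b _ (by omega) hbig' with ⟨L', h1, h2, h3⟩ | ⟨L', h1, h2, h3⟩
      · left
        exact ⟨L', (h1.trans List.filter_sublist).trans (List.sublist_cons_self _ _), h2, h3⟩
      · right
        refine ⟨h :: L', (h1.trans List.filter_sublist).cons_cons h, by simp [h2], ?_⟩
        refine List.Pairwise.cons ?_ h3
        intro x hx
        have := h1.subset hx
        simpa using (List.mem_filter.1 this).2

/-- `fib (N+1)` permutations moving each point by at most one. -/
lemma fib_family : ∀ N : ℕ, ∃ F : Finset (Equiv.Perm ℕ), F.card = Nat.fib (N + 1) ∧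
    ∀ f ∈ F, (∀ i, N ≤ i → f i = i) ∧ ∀ i, f i ≤ i + 1 ∧ i ≤ f i + 1 := by
  intro N
  induction N using Nat.twoStepInduction with
  | zero => exact ⟨{1}, by simp, by simp⟩
  | one => exact ⟨{1}, by simp, by simp⟩
  | more N ih0 ih1 =>
    obtain ⟨F0, hc0, hF0⟩ := ih0
    obtain ⟨F1, hc1, hF1⟩ := ih1
    classical
    refine ⟨F1 ∪ F0.image (fun f => f * Equiv.swap N (N + 1)), ?_, ?_⟩
    · rw [Finset.card_union_of_disjoint, Finset.card_image_of_injective, hc0, hc1,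
        Nat.fib_add_two (n := N + 1), add_comm]
      · intro f g h
        exact mul_right_cancel h
      · rw [Finset.disjoint_left]
        intro f hf hf'
        obtain ⟨g, hg, rfl⟩ := Finset.mem_image.1 hf'
        have h1 := (hF1 _ hf).1 (N + 1) le_rfl
        have h2 := (hF0 _ hg).1 N le_rfl
        simp [h2] at h1
    · intro f hf
      rcases Finset.mem_union.1 hf with hf | hf
      · exact ⟨fun i hi => (hF1 f hf).1 i (by omega), (hF1 f hf).2⟩
      · obtain ⟨g, hg, rfl⟩ := Finset.mem_image.1 hf
        obtain ⟨hg1, hg2⟩ := hF0 g hg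
        constructor
        · intro i hi
          rw [Equiv.Perm.mul_apply, Equiv.swap_apply_of_ne_of_ne (by omega) (by omega)]
          exact hg1 i (by omega)
        · intro i
          rw [Equiv.Perm.mul_apply]
          by_cases h1 : i = N
          · subst h1
            rw [Equiv.swap_apply_left, hg1 _ (by omega)]
            omega
          by_cases h2 : i = N + 1
          · subst h2
            rw [Equiv.swap_apply_right, hg1 _ le_rfl]
            omega
          rw [Equiv.swap_apply_of_ne_of_ne h1 h2]
          exact hg2 i

/-- A chain of `a` pairs, each reversed with respect to `R`, placed in `R`-increasing order. -/
def HasPairs {n : ℕ} (R : Fin n → Fin n → Prop) (a : ℕ) : Prop :=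
  ∃ x x' : ℕ → Fin n, (∀ p < a, x p < x' p ∧ R (x' p) (x p)) ∧
    ∀ p q, p < q → q < a → x' p < x q ∧ R (x p) (x q) ∧ R (x p) (x' q) ∧ R (x' p) (x q) ∧
      R (x' p) (x' q)

lemma embed_pairs {n a : ℕ} (R : Fin n → Fin n → Prop) (h : HasPairs R a) (f : Equiv.Perm ℕ)
    (hf : ∀ i, f i ≤ i + 1 ∧ i ≤ f i + 1) :
    ∃ g : ℕ → Fin n, (∀ i j, i < j → j < a → g i < g j) ∧
      ∀ i j, i < a → j < a → f i < f j → R (g i) (g j) := by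
  obtain ⟨x, x', h1, h2⟩ := h
  refine ⟨fun j => if f j < j then x' (j - 1) else x j, ?_, ?_⟩
  · intro i j hij hj
    have hi' := hf i
    have hj' := hf j
    have hinj : f i ≠ f j := fun e => by have := f.injective e; omega
    dsimp only
    split_ifs with ha hb hb
    · have A := h2 (i - 1) (j - 1) (by omega) (by omega)
      exact A.1.trans (h1 (j - 1) (by omega)).1
    · exact (h2 (i - 1) j (by omega) (by omega)).1
    · by_cases e : i = j - 1
      · rw [← e]; exact (h1 i (by omega)).1
      · have A := h2 i (j - 1) (by omega) (by omega)
        exact (h1 i (by omega)).1.trans (A.1.trans (h1 (j - 1) (by omega)).1)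
    · exact (h1 i (by omega)).1.trans (h2 i j (by omega) (by omega)).1
  · intro i j hi hj hij
    have hi' := hf i
    have hj' := hf j
    have hne : i ≠ j := fun e => by subst e; omega
    dsimp only
    split_ifs with ha hb hb
    · exact (h2 (i - 1) (j - 1) (by omega) (by omega)).2.2.2.2
    · by_cases e : j = i - 1
      · rw [e]; exact (h1 (i - 1) (by omega)).2
      · exact (h2 (i - 1) j (by omega) (by omega)).2.2.2.1
    · exact (h2 i (j - 1) (by omega) (by omega)).2.2.1
    · exact (h2 i j (by omega) (by omega)).2.1

/-- Restrict a permutation of `ℕ` fixing everything from `N` on. -/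
lemma restrict_perm {N : ℕ} (f : Equiv.Perm ℕ) (hf : ∀ i, N ≤ i → f i = i) :
    ∃ σ : Equiv.Perm (Fin N), ∀ i, (σ i : ℕ) = f i := by
  have hlt : ∀ i : Fin N, f i < N := by
    intro i
    by_contra h
    have := f.injective (hf (f i) (by omega))
    omega
  have hinj : Function.Injective (fun i : Fin N => (⟨f i, hlt i⟩ : Fin N)) := by
    intro i j h
    have := f.injective (Fin.mk.inj h)
    exact Fin.ext this
  exact ⟨Equiv.ofBijective _ (Finite.injective_iff_bijective.1 hinj), fun i => rfl⟩

lemma card_of_perms {N : ℕ} (S : Set (Equiv.Perm (Fin N))) (rv : Equiv.Perm (Fin N))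
    (h : ∀ (f : Equiv.Perm ℕ) (σ : Equiv.Perm (Fin N)), (∀ i, f i ≤ i + 1 ∧ i ≤ f i + 1) →
      (∀ i, (σ i : ℕ) = f i) → rv * σ ∈ S) : Nat.fib N ≤ Nat.card S := by
  classical
  obtain ⟨F, hc, hF⟩ := fib_family N
  choose! G hG using fun (f : Equiv.Perm ℕ) (hf : ∀ i, N ≤ i → f i = i) => restrict_perm f hf
  have hle : F.card ≤ Nat.card S := by
    have : Function.Injective (fun f : F => (⟨rv * G f.1, h f.1 _ (hF f.1 f.2).2
        (hG f.1 (hF f.1 f.2).1)⟩ : S)) := by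
      rintro ⟨f, hf⟩ ⟨g, hg⟩ e
      have e1 : G f = G g := mul_left_cancel (Subtype.mk.inj e)
      apply Subtype.ext
      ext i
      by_cases hi : i < N
      · have a1 := hG f (hF f hf).1 ⟨i, hi⟩
        have a2 := hG g (hF g hg).1 ⟨i, hi⟩
        rw [e1] at a1
        exact a1.symm.trans a2
      · change f i = g i
        rw [(hF f hf).1 i (by omega), (hF g hg).1 i (by omega)]
    have := Nat.card_le_card_of_injective _ this
    simpa using this
  rw [hc] at hle
  exact (Nat.fib_mono (Nat.le_succ N)).trans hle

lemma no_pairs_inc (C : ∀ n : ℕ, Set (Equiv.Perm (Fin n))) (hC : IsPermClass C) {N n : ℕ}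
    (π : Equiv.Perm (Fin n)) (hπ : π ∈ C n) (h : HasPairs (fun u v => π u < π v) N) :
    Nat.fib N ≤ Nat.card (C N) := by
  refine card_of_perms _ 1 ?_
  intro f σ hf hσ
  obtain ⟨g, hg1, hg2⟩ := embed_pairs _ h f hf
  refine hC N n _ π hπ ⟨fun i => g i, fun i j hij => hg1 _ _ hij j.2, fun i j => ?_⟩
  simp only [one_mul, Fin.lt_def (a := σ i), hσ]
  refine ⟨hg2 _ _ i.2 j.2, fun hh => ?_⟩
  by_contra hcon
  rcases (not_lt.1 hcon).lt_or_eq with h1 | h1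
  · exact absurd (hg2 _ _ j.2 i.2 h1) (not_lt.2 hh.le)
  · have := f.injective h1
    rw [this] at hh
    exact lt_irrefl _ hh

lemma no_pairs_dec (C : ∀ n : ℕ, Set (Equiv.Perm (Fin n))) (hC : IsPermClass C) {N n : ℕ}
    (π : Equiv.Perm (Fin n)) (hπ : π ∈ C n) (h : HasPairs (fun u v => π v < π u) N) :
    Nat.fib N ≤ Nat.card (C N) := by
  refine card_of_perms _ Fin.revPerm ?_
  intro f σ hf hσ
  obtain ⟨g, hg1, hg2⟩ := embed_pairs _ h f hf
  refine hC N n _ π hπ ⟨fun i => g i, fun i j hij => hg1 _ _ hij j.2, fun i j => ?_⟩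
  simp only [Equiv.Perm.mul_apply, Fin.revPerm_apply, Fin.rev_lt_rev, Fin.lt_def (a := σ j), hσ]
  refine ⟨hg2 _ _ j.2 i.2, fun hh => ?_⟩
  by_contra hcon
  rcases (not_lt.1 hcon).lt_or_eq with h1 | h1
  · exact absurd (hg2 _ _ i.2 j.2 h1) (not_lt.2 hh.le)
  · have := f.injective h1
    rw [this] at hh
    exact lt_irrefl _ hh

/-- The points of the given block of π form a monotone sequence. -/
def GoodBlock {n : ℕ} (π : Equiv.Perm (Fin n)) (x x' y y' : ℕ) : Prop :=
  (∀ i j : Fin n, i < j → x ≤ i → (j : ℕ) < x' → y ≤ π i → (π i : ℕ) < y' → y ≤ π j →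
    (π j : ℕ) < y' → π i < π j) ∨
  (∀ i j : Fin n, i < j → x ≤ i → (j : ℕ) < x' → y ≤ π i → (π i : ℕ) < y' → y ≤ π j →
    (π j : ℕ) < y' → π j < π i)

lemma GoodBlock.anti {n : ℕ} {π : Equiv.Perm (Fin n)} {x x' y y' z z' w w' : ℕ}
    (h : GoodBlock π x x' y y') (h1 : x ≤ z) (h2 : z' ≤ x') (h3 : y ≤ w) (h4 : w' ≤ y') :
    GoodBlock π z z' w w' := by
  rcases h with h | h
  · left
    intro i j hij a b c d e f
    exact h i j hij (by omega) (by omega) (by omega) (by omega) (by omega) (by omega)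
  · right
    intro i j hij a b c d e f
    exact h i j hij (by omega) (by omega) (by omega) (by omega) (by omega) (by omega)

/-- A bad block contains a descent pair and an ascent pair. -/
lemma bad_block {n : ℕ} {π : Equiv.Perm (Fin n)} {x x' y y' : ℕ} (h : ¬ GoodBlock π x x' y y')
    (s : Bool) :
    ∃ i j : Fin n, i < j ∧ x ≤ i ∧ (j : ℕ) < x' ∧ y ≤ π i ∧ (π i : ℕ) < y' ∧ y ≤ π j ∧
    (π j : ℕ) < y' ∧ (if s then π j < π i else π i < π j) := by
  unfold GoodBlock at h
  push Not at h
  obtain ⟨⟨i, j, hij, a, b, c, d, e, f, g⟩, ⟨i', j', hij', a', b', c', d', e', f', g'⟩⟩ := h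
  rcases s with _ | _
  · refine ⟨i', j', hij', a', b', c', d', e', f', ?_⟩
    simp only [Bool.false_eq_true, if_false]
    exact lt_of_le_of_ne g' (fun e => hij'.ne (π.injective e))
  · refine ⟨i, j, hij, a, b, c, d, e, f, ?_⟩
    simp only [if_true]
    exact lt_of_le_of_ne g (fun e => hij.ne (π.injective e).symm)

lemma core_labels {n : ℕ} (π : Equiv.Perm (Fin n)) (a K : ℕ) (hK : K = 2 ^ (a + a))
    (h1 : ¬ HasPairs (fun u v => π u < π v) a) (h2 : ¬ HasPairs (fun u v => π v < π u) a) :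
    ∃ A B : ℕ → ℕ, Monotone A ∧ Monotone B ∧ (∀ v, A v < 2 * K) ∧
      (∀ v, B v < 2 * K * (2 * K) + 1) ∧ ∀ α β,
      (∀ i j : Fin n, i < j → A i = α → A j = α → B (π i) = β → B (π j) = β → π i < π j) ∨
      (∀ i j : Fin n, i < j → A i = α → A j = α → B (π i) = β → B (π j) = β → π j < π i) := by
  have hKpos : 0 < K := by rw [hK]; positivity
  let P : ℕ → ℕ → Prop := fun x x' =>
    ¬ ∃ d : ℕ → ℕ, Monotone d ∧ 0 ≤ d 0 ∧ d K ≤ n ∧ ∀ i < K, ¬ GoodBlock π x x' (d i) (d (i + 1))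
  have hanti : ∀ x x' y y', x ≤ x' → y' ≤ y → P x y → P x' y' := by
    rintro x x' y y' hx hy hP ⟨d, hd, hd0, hdk, hb⟩
    exact hP ⟨d, hd, hd0, hdk, fun i hi hg => hb i hi (hg.anti hx hy le_rfl le_rfl)⟩
  have hsing : ∀ x, P x (x + 1) := by
    rintro x ⟨d, hd, hd0, hdk, hb⟩
    refine hb 0 hKpos (Or.inl ?_)
    intro i j hij _ _
    have : (i : ℕ) < j := hij
    omega
  rcases greedy_split P hanti hsing n K 0 (Nat.zero_le _) with ⟨e, he, _, _, hbad⟩ | ⟨A, hA, hAk, hAP⟩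
  · exfalso
    -- many bad strips
    have hbad' : ∀ p, ∃ d : ℕ → ℕ, Monotone d ∧ (p < K → ∀ i < K,
        ¬ GoodBlock π (e p) (e (p + 1)) (d i) (d (i + 1))) := by
      intro p
      by_cases hp : p < K
      · obtain ⟨d, hd, _, _, hb⟩ := not_not.1 (hbad p hp)
        exact ⟨d, hd, fun _ => hb⟩
      · exact ⟨fun _ => 0, monotone_const, fun h => absurd h hp⟩
    choose d hd hb using hbad'
    obtain ⟨q, hq1, hq2⟩ := rainbow d hd K (Finset.range K) 0 (by simp)
    have hB : ∀ p, p < K → ¬ GoodBlock π (e p) (e (p + 1)) (d p (q p)) (d p (q p + 1)) := by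
      intro p hp
      have := hq1 p (Finset.mem_range.2 hp)
      exact hb p hp _ (by omega)
    have hlist : ∀ L : List ℕ, L.Sublist (List.range K) → L.length = a →
        ∀ i j, i < j → j < a → L.getD i 0 < L.getD j 0 ∧ L.getD j 0 < K := by
      intro L hL hlen i j hij hj
      have hs : L.Pairwise (· < ·) := List.Pairwise.sublist hL List.pairwise_lt_range
      have := List.pairwise_iff_getElem.1 hs i j (by omega) (by omega) hij
      rw [List.getD_eq_getElem _ _ (by omega), List.getD_eq_getElem _ _ (by omega)]
      refine ⟨this, ?_⟩
      exact List.mem_range.1 (hL.subset (List.getElem_mem _))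
    have hlist' : ∀ L : List ℕ, L.Sublist (List.range K) → L.length = a →
        ∀ j, j < a → L.getD j 0 < K := by
      intro L hL hlen j hj
      rw [List.getD_eq_getElem _ _ (by omega)]
      exact List.mem_range.1 (hL.subset (List.getElem_mem _))
    have hpw : ∀ (r : ℕ → ℕ → Prop) (L : List ℕ), L.Pairwise r → L.length = a →
        ∀ i j, i < j → j < a → r (L.getD i 0) (L.getD j 0) := by
      intro r L hs hlen i j hij hj
      have := List.pairwise_iff_getElem.1 hs i j (by omega) (by omega) hij
      rw [List.getD_eq_getElem _ _ (by omega), List.getD_eq_getElem _ _ (by omega)]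
      exact this
    have hpts : ∀ (s : Bool) (p : ℕ), ∃ ij : Fin n × Fin n, p < K → (ij.1 < ij.2 ∧ e p ≤ ij.1 ∧
        (ij.2 : ℕ) < e (p + 1) ∧ d p (q p) ≤ π ij.1 ∧ (π ij.1 : ℕ) < d p (q p + 1) ∧
        d p (q p) ≤ π ij.2 ∧ (π ij.2 : ℕ) < d p (q p + 1) ∧
        (if s then π ij.2 < π ij.1 else π ij.1 < π ij.2)) := by
      intro s p
      by_cases hp : p < K
      · obtain ⟨i, j, hh⟩ := bad_block (hB p hp) s
        exact ⟨(i, j), fun _ => hh⟩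
      · obtain ⟨i, _⟩ := bad_block (hB 0 hKpos) s
        exact ⟨(i, i), fun h => absurd h hp⟩
    choose pt hpt using hpts
    rcases ramsey_list (fun x y => q x < q y) (a + a) a a (List.range K) le_rfl
      (by simp [hK]) with ⟨L, hL, hlen, hr⟩ | ⟨L, hL, hlen, hr⟩
    · apply h1
      refine ⟨fun i => (pt true (L.getD i 0)).1, fun i => (pt true (L.getD i 0)).2, ?_, ?_⟩
      · intro p hp
        have := hpt true _ (hlist' L hL hlen p hp)
        simp only [if_true] at this
        exact ⟨this.1, this.2.2.2.2.2.2.2⟩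
      · intro i j hij hj
        have hl := hlist L hL hlen i j hij hj
        have hq := hpw _ L hr hlen i j hij hj
        have A1 := hpt true _ (hl.1.trans hl.2)
        have A2 := hpt true _ hl.2
        have hsep := (hq2 _ (Finset.mem_range.2 (hl.1.trans hl.2)) _ (Finset.mem_range.2 hl.2)
          hl.1.ne).2 hq
        have hx : e (L.getD i 0 + 1) ≤ e (L.getD j 0) := he hl.1
        simp only [Fin.lt_def]
        omega
    · apply h2
      refine ⟨fun i => (pt false (L.getD i 0)).1, fun i => (pt false (L.getD i 0)).2, ?_, ?_⟩
      · intro p hp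
        have := hpt false _ (hlist' L hL hlen p hp)
        simp only [Bool.false_eq_true, if_false] at this
        exact ⟨this.1, this.2.2.2.2.2.2.2⟩
      · intro i j hij hj
        have hl := hlist L hL hlen i j hij hj
        have hq := hpw _ L hr hlen i j hij hj
        have A1 := hpt false _ (hl.1.trans hl.2)
        have A2 := hpt false _ hl.2
        have hor := (hq2 _ (Finset.mem_range.2 (hl.1.trans hl.2)) _ (Finset.mem_range.2 hl.2)
          hl.1.ne).1
        have hsep := (hq2 _ (Finset.mem_range.2 hl.2) _ (Finset.mem_range.2 (hl.1.trans hl.2))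
          hl.1.ne').2 (hor.resolve_left hq)
        have hx : e (L.getD i 0 + 1) ≤ e (L.getD j 0) := he hl.1
        simp only [Fin.lt_def]
        omega
  · choose X Y hXY hAX using hAP
    have hrow : ∀ j, ∃ f : ℕ → ℕ, Monotone f ∧ (∀ v, f v < 2 * K) ∧
        ∀ l, ∃ x y, GoodBlock π (X j) (Y j) x y ∧
          ∀ v, 0 ≤ v → v < n → f v = l → x ≤ v ∧ v < y := by
      intro j
      refine (greedy_split (fun y y' => GoodBlock π (X j) (Y j) y y') ?_ ?_ n K 0
        (Nat.zero_le _)).resolve_left (hXY j)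
      · intro x x' y y' hx hy hg
        exact hg.anti le_rfl le_rfl hx hy
      · intro y
        left
        intro i k hik _ _ c1 c2 c3 c4
        have : π i = π k := Fin.ext (by omega)
        exact absurd (π.injective this) hik.ne
    choose f hf hfK hfg using hrow
    refine ⟨A, fun v => ∑ j ∈ Finset.range (2 * K), f j v, hA, ?_, hAk, ?_, ?_⟩
    · intro v w hvw
      exact Finset.sum_le_sum fun j _ => hf j hvw
    · intro v
      have : ∑ j ∈ Finset.range (2 * K), f j v ≤ ∑ j ∈ Finset.range (2 * K), 2 * K :=
        Finset.sum_le_sum fun j _ => (hfK j v).le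
      simp only [Finset.sum_const, Finset.card_range, smul_eq_mul] at this
      exact Nat.lt_succ_of_le this
    · intro α β
      -- equal sums give equal labels
      have key : ∀ v w, ∑ j ∈ Finset.range (2 * K), f j v = β →
          ∑ j ∈ Finset.range (2 * K), f j w = β → ∀ j < 2 * K, f j v = f j w := by
        intro v w hv hw j hj
        rcases le_total v w with hvw | hvw
        · exact (Finset.sum_eq_sum_iff_of_le (fun j _ => hf j hvw)).1 (hv.trans hw.symm) j
            (Finset.mem_range.2 hj)
        · exact ((Finset.sum_eq_sum_iff_of_le (fun j _ => hf j hvw)).1 (hw.trans hv.symm) j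
            (Finset.mem_range.2 hj)).symm
      by_cases hne : ∃ i0 : Fin n, A i0 = α ∧
          ∑ j ∈ Finset.range (2 * K), f j (π i0) = β
      · obtain ⟨i0, hi0, hi0'⟩ := hne
        have hα : α < 2 * K := hi0 ▸ hAk i0
        obtain ⟨x, y, hg, hxy⟩ := hfg α (f α (π i0))
        have hmem : ∀ i : Fin n, A i = α → ∑ j ∈ Finset.range (2 * K), f j (π i) = β →
            X α ≤ i ∧ (i : ℕ) < Y α ∧ x ≤ π i ∧ (π i : ℕ) < y := by
          intro i hi hi'
          have a1 := hAX α i (Nat.zero_le _) i.2 hi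
          have a2 := hxy (π i) (Nat.zero_le _) (π i).2 (key _ _ hi' hi0' α hα)
          exact ⟨a1.1, a1.2, a2.1, a2.2⟩
        rcases hg with hg | hg
        · left
          intro i j hij a1 a2 b1 b2
          have c1 := hmem i a1 b1
          have c2 := hmem j a2 b2
          exact hg i j hij c1.1 c2.2.1 c1.2.2.1 c1.2.2.2 c2.2.2.1 c2.2.2.2
        · right
          intro i j hij a1 a2 b1 b2
          have c1 := hmem i a1 b1
          have c2 := hmem j a2 b2
          exact hg i j hij c1.1 c2.2.1 c1.2.2.1 c1.2.2.2 c2.2.2.1 c2.2.2.2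
      · left
        intro i j _ a1 _ b1 _
        exact absurd ⟨i, a1, b1⟩ hne

/-- Turning a monotone labelling into a sequence of cuts. -/
lemma cuts_of_labels (n t : ℕ) (A : ℕ → ℕ) (hA : Monotone A) (hAt : ∀ v, A v < t) :
    ∃ c : ℕ → ℕ, Monotone c ∧ c 0 = 0 ∧ c t = n ∧ ∀ i < n, ∀ k, i < c k ↔ A i < k := by
  classical
  have hex : ∀ k, ∃ m, m = n ∨ k ≤ A m := fun k => ⟨n, Or.inl rfl⟩
  have hlt : ∀ i < n, ∀ k, i < Nat.find (hex k) ↔ A i < k := by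
    intro i hi k
    rw [Nat.lt_find_iff]
    constructor
    · intro h
      have := h i le_rfl
      omega
    · intro h m hm
      have := hA hm
      omega
  have hle : ∀ k, Nat.find (hex k) ≤ n := fun k => Nat.find_min' _ (Or.inl rfl)
  refine ⟨fun k => Nat.find (hex k), ?_, ?_, ?_, hlt⟩
  · intro k k' hkk
    refine Nat.find_min' _ ?_
    rcases Nat.find_spec (hex k') with h | h
    · exact Or.inl h
    · exact Or.inr (hkk.trans h)
  · exact Nat.le_zero.1 (Nat.find_min' _ (Or.inr (Nat.zero_le _)))
  · refine le_antisymm (hle t) ?_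
    by_contra h
    exact lt_irrefl _ ((hlt _ (not_le.1 h) t).2 (hAt _))

lemma grid_of_labels {n T U : ℕ} (M : Fin T → Fin U → SignType) (π : Equiv.Perm (Fin n))
    (A B : ℕ → ℕ) (hA : Monotone A) (hB : Monotone B) (hAt : ∀ v, A v < T) (hBu : ∀ v, B v < U)
    (h : ∀ (k : Fin T) (l : Fin U),
      (M k l = 1 → ∀ i j : Fin n, A i = k → B (π i) = l → A j = k → B (π j) = l → i < j →
        π i < π j) ∧
      (M k l = -1 → ∀ i j : Fin n, A i = k → B (π i) = l → A j = k → B (π j) = l → i < j →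
        π j < π i) ∧
      (M k l = 0 → ∀ i : Fin n, ¬ (A i = k ∧ B (π i) = l))) : InGrid M π := by
  obtain ⟨c, hc, hc0, hct, hcl⟩ := cuts_of_labels n T A hA hAt
  obtain ⟨r, hr, hr0, hru, hrl⟩ := cuts_of_labels n U B hB hBu
  have hblk : ∀ (k : Fin T) (l : Fin U) (i : Fin n),
      InBlock π (fun k => c k) (fun l => r l) k l i → A i = k ∧ B (π i) = l := by
    rintro k l i ⟨b1, b2, b3, b4⟩
    simp only [Fin.val_castSucc, Fin.val_succ] at b1 b2 b3 b4
    have e1 := hcl i i.2 k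
    have e2 := (hcl i i.2 (k + 1)).1 b2
    have e3 := hrl (π i) (π i).2 l
    have e4 := (hrl (π i) (π i).2 (l + 1)).1 b4
    omega
  refine ⟨fun k => c k, fun l => r l, fun a b hab => hc hab, fun a b hab => hr hab, by simpa using hc0,
    by simpa using hct, by simpa using hr0, by simpa using hru, ?_⟩
  intro k l
  obtain ⟨g1, g2, g3⟩ := h k l
  refine ⟨fun hM i j hi hj hij => ?_, fun hM i j hi hj hij => ?_, fun hM i hi => ?_⟩
  · exact g1 hM i j (hblk _ _ _ hi).1 (hblk _ _ _ hi).2 (hblk _ _ _ hj).1 (hblk _ _ _ hj).2 hij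
  · exact g2 hM i j (hblk _ _ _ hi).1 (hblk _ _ _ hi).2 (hblk _ _ _ hj).1 (hblk _ _ _ hj).2 hij
  · exact g3 hM i (hblk _ _ _ hi)

/-- A single matrix works for everything with bounded labellings. -/
lemma universal_matrix (t u : ℕ) : ∃ (T U : ℕ) (M : Fin T → Fin U → SignType),
    ∀ (n : ℕ) (π : Equiv.Perm (Fin n)),
    (∃ A B : ℕ → ℕ, Monotone A ∧ Monotone B ∧ (∀ v, A v < t) ∧
      (∀ v, B v < u) ∧ ∀ α β,
      (∀ i j : Fin n, i < j → A i = α → A j = α → B (π i) = β → B (π j) = β → π i < π j) ∨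
      (∀ i j : Fin n, i < j → A i = α → A j = α → B (π i) = β → B (π j) = β → π j < π i)) →
    InGrid M π := by
  classical
  obtain ⟨N, ⟨e⟩⟩ := Finite.exists_equiv_fin (Fin t → Fin u → SignType)
  refine ⟨N * t, N * u, fun x y =>
    if (finProdFinEquiv.symm x).1 = (finProdFinEquiv.symm y).1 then
      e.symm (finProdFinEquiv.symm x).1 (finProdFinEquiv.symm x).2 (finProdFinEquiv.symm y).2
    else 0, ?_⟩
  rintro n π ⟨A, B, hA, hB, hAt, hBu, hcell⟩
  let M0 : Fin t → Fin u → SignType := fun α β =>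
    if (∀ i j : Fin n, i < j → A i = α → A j = α → B (π i) = β → B (π j) = β → π i < π j)
    then 1 else -1
  let m := e M0
  have hA' : ∀ v, (finProdFinEquiv (m, (⟨A v, hAt v⟩ : Fin t)) : ℕ) = A v + t * m := fun v => rfl
  have hB' : ∀ v, (finProdFinEquiv (m, (⟨B v, hBu v⟩ : Fin u)) : ℕ) = B v + u * m := fun v => rfl
  have hx : ∀ v (k : Fin (N * t)), A v + t * m = k →
      finProdFinEquiv.symm k = (m, (⟨A v, hAt v⟩ : Fin t)) := by
    intro v k hk
    rw [Equiv.symm_apply_eq]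
    exact Fin.ext (by rw [hA', hk])
  have hy : ∀ v (l : Fin (N * u)), B v + u * m = l →
      finProdFinEquiv.symm l = (m, (⟨B v, hBu v⟩ : Fin u)) := by
    intro v k hk
    rw [Equiv.symm_apply_eq]
    exact Fin.ext (by rw [hB', hk])
  refine grid_of_labels _ π (fun v => A v + t * m) (fun v => B v + u * m)
    (fun a b h => Nat.add_le_add_right (hA h) _) (fun a b h => Nat.add_le_add_right (hB h) _)
    (fun v => by rw [← hA']; exact Fin.is_lt _) (fun v => by rw [← hB']; exact Fin.is_lt _) ?_
  intro k l
  have hM : ∀ i : Fin n, A i + t * m = k → B (π i) + u * m = l →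
      (if (finProdFinEquiv.symm k).1 = (finProdFinEquiv.symm l).1 then
      e.symm (finProdFinEquiv.symm k).1 (finProdFinEquiv.symm k).2 (finProdFinEquiv.symm l).2
      else 0) = M0 ⟨A i, hAt i⟩ ⟨B (π i), hBu _⟩ := by
    intro i hi hi'
    rw [hx _ _ hi, hy _ _ hi']
    simp [m]
  refine ⟨fun hk i j a1 b1 a2 b2 hij => ?_, fun hk i j a1 b1 a2 b2 hij => ?_,
    fun hk i hi => ?_⟩
  · have h0 := (hM i a1 b1).symm.trans hk
    simp only [M0] at h0
    split_ifs at h0 with hc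
    exact hc i j hij rfl (by omega) rfl (by omega)
  · have h0 := (hM i a1 b1).symm.trans hk
    simp only [M0] at h0
    split_ifs at h0 with hc
    exact ((hcell _ _).resolve_left hc) i j hij rfl (by omega) rfl
      (by omega)
  · have h0 := (hM i hi.1 hi.2).symm.trans hk
    simp only [M0] at h0
    split_ifs at h0

/-- **Proposition.** Every sub-Fibonacci permutation class (one with `|C_n| < F_n` for some
`n`, where `F_1 = F_2 = 1`) is griddable. -/
theorem subFibonacci_griddable (C : ∀ n : ℕ, Set (Equiv.Perm (Fin n))) (hC : IsPermClass C)
    (hfib : ∃ n : ℕ, Nat.card (C n) < Nat.fib n) :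
    ∃ (t u : ℕ) (M : Fin t → Fin u → SignType), ∀ n : ℕ, ∀ π ∈ C n, InGrid M π := by
  obtain ⟨N, hN⟩ := hfib
  obtain ⟨T, U, M, hM⟩ := universal_matrix (2 * 2 ^ (N + N)) (2 * 2 ^ (N + N) * (2 * 2 ^ (N + N)) + 1)
  refine ⟨T, U, M, fun n π hπ => hM n π ?_⟩
  refine core_labels π N _ rfl (fun h => ?_) (fun h => ?_)
  · exact absurd (no_pairs_inc C hC π hπ h) (not_le.2 hN)
  · exact absurd (no_pairs_dec C hC π hπ h) (not_le.2 hN)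
end
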